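/- Let n ≥ 1. Then the following identity of polynomials in ℚ[t] holds: n · Σ_{π ∈ 𝔠_n} 4^{pk(π)+1} t^{pk(π)+1} (1+t)^{n−1−2·pk(π)} = Σ_{d ∣ n, d odd} μ(d) 2^{n/d+1} (1−t)^{n−n/d} A_{n/d}(t). (This is the formula n(1+t)^{n+1} C_n^{pk}(4t/(1+t)²) = Σ_{d ∣ n, d odd} μ(d) 2^{n/d+1} (1−t)^{n−n/d} A_{n/d}(t), where C_n^{pk}(t) = Σ_{π ∈ 𝔠_n} t^{pk(π)+1}, with denominators cleared; note 2·pk(π) ≤ n−1 for every π ∈ S_n.) -/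

import Mathlib

open scoped Classical

noncomputable section

def oneLine (n : ℕ) (π : Equiv.Perm (Fin n)) (i : ℕ) : ℕ :=
  if h : 1 ≤ i ∧ i ≤ n then (π ⟨i - 1, by omega⟩).val + 1 else 0

def des (n : ℕ) (π : Equiv.Perm (Fin n)) : ℕ :=
  ((Finset.Icc 1 (n - 1)).filter fun i => oneLine n π (i + 1) < oneLine n π i).card

def pk (n : ℕ) (π : Equiv.Perm (Fin n)) : ℕ :=
  ((Finset.Icc 2 (n - 1)).filter fun i =>
    oneLine n π (i - 1) < oneLine n π i ∧ oneLine n π (i + 1) < oneLine n π i).card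

def lpk (n : ℕ) (π : Equiv.Perm (Fin n)) : ℕ :=
  ((Finset.Icc 1 (n - 1)).filter fun i =>
    oneLine n π (i - 1) < oneLine n π i ∧ oneLine n π (i + 1) < oneLine n π i).card

def pval (n : ℕ) (π : Equiv.Perm (Fin n)) : ℕ :=
  ((Finset.Icc 2 (n - 1)).filter fun i =>
    oneLine n π i < oneLine n π (i - 1) ∧ oneLine n π i < oneLine n π (i + 1)).card

def udr (n : ℕ) (π : Equiv.Perm (Fin n)) : ℕ := lpk n π + pval n π + 1

def fullCycleType (n : ℕ) (π : Equiv.Perm (Fin n)) : Multiset ℕ :=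
  π.cycleType + Multiset.replicate (n - π.support.card) 1

def numCycles (n : ℕ) (π : Equiv.Perm (Fin n)) : ℕ := Multiset.card (fullCycleType n π)

def numOddCycles (n : ℕ) (π : Equiv.Perm (Fin n)) : ℕ :=
  Multiset.card ((fullCycleType n π).filter fun p => p % 2 = 1)

def IsCyclicPerm (n : ℕ) (π : Equiv.Perm (Fin n)) : Prop :=
  fullCycleType n π = {n}

def cyclicSet (n : ℕ) : Finset (Equiv.Perm (Fin n)) :=
  Finset.univ.filter fun π => IsCyclicPerm n π

def invSet (n : ℕ) : Finset (Equiv.Perm (Fin n)) :=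
  Finset.univ.filter fun π => π ^ 2 = 1

def eulerianA (m : ℕ) : Polynomial ℚ :=
  ∑ π : Equiv.Perm (Fin m), Polynomial.X ^ (des m π + 1)

def peakP (m : ℕ) : Polynomial ℚ :=
  ∑ π : Equiv.Perm (Fin m), Polynomial.X ^ (pk m π + 1)

def leftPeakP (m : ℕ) : Polynomial ℚ :=
  ∑ π : Equiv.Perm (Fin m), Polynomial.X ^ (lpk m π)

def cnk (n k : ℕ) : ℕ :=
  (Finset.univ.filter fun π : Equiv.Perm (Fin n) =>
    (∀ p ∈ fullCycleType n π, ¬ (4 ∣ p)) ∧ numCycles n (π ^ 2) = k).card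

def bnk (n k : ℕ) : ℕ :=
  (Finset.univ.filter fun π : Equiv.Perm (Fin n) => numCycles n (π ^ 2) = k).card

def dnk (n k : ℕ) : ℕ :=
  (Finset.univ.filter fun π : Equiv.Perm (Fin n) => numOddCycles n (π ^ 2) = k).card


def Comp (n N : ℕ) (pos : ℕ → Prop) (π : Equiv.Perm (Fin n)) (f : Fin n → Fin N) : Prop :=
  ∀ i j, i < j → f i ≤ f j ∧ (f i = f j → ((pos (f i) → π i < π j) ∧ (¬ pos (f i) → π j < π i)))

def DD (n : ℕ) (π : Equiv.Perm (Fin n)) (i : ℕ) : Prop :=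
  oneLine n π (i + 2) < oneLine n π (i + 1)

def Chn (j N : ℕ) (pos D : ℕ → Prop) (f : Fin (j + 1) → Fin N) : Prop :=
  ∀ i : Fin j, f i.castSucc < f i.succ ∨
    (f i.castSucc = f i.succ ∧ (pos (f i.succ) ↔ ¬ D i))

def cc (pos D : ℕ → Prop) : ℕ → ℕ → ℕ
  | 0, _ => 1
  | j + 1, m => (∑ m' ∈ Finset.range m, cc pos D j m') +
      if (pos m ↔ ¬ D j) then cc pos D j m else 0

theorem DD_iff (n : ℕ) (π : Equiv.Perm (Fin (n+1))) (i : Fin n) :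
    DD (n+1) π i ↔ π i.succ < π i.castSucc := by
  unfold DD oneLine
  rw [dif_pos (by omega), dif_pos (by omega)]
  have h1 : (⟨(i:ℕ) + 2 - 1, by omega⟩ : Fin (n+1)) = i.succ := by ext; simp
  have h2 : (⟨(i:ℕ) + 1 - 1, by omega⟩ : Fin (n+1)) = i.castSucc := by ext; simp
  rw [h1, h2, Fin.lt_def]; omega

theorem comp_iff (n N : ℕ) (pos : ℕ → Prop) (π : Equiv.Perm (Fin (n+1)))
    (f : Fin (n+1) → Fin N) :
    Comp (n+1) N pos π f ↔ Chn n N pos (DD (n+1) π) f := by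
  constructor
  · intro h i
    obtain ⟨h1, h2⟩ := h i.castSucc i.succ (Fin.castSucc_lt_succ)
    rcases lt_or_eq_of_le h1 with h3 | h3
    · exact Or.inl h3
    · right
      refine ⟨h3, ?_⟩
      rw [DD_iff]
      have := h2 h3
      rw [h3] at this
      constructor
      · intro hp; exact not_lt.2 (this.1 hp).le
      · intro hd; by_contra hp; exact hd (this.2 hp)
  · intro h i j
    induction j using Fin.induction with
    | zero => intro hij; simp at hij
    | succ j ih =>
      intro hij
      have hle : i ≤ j.castSucc := Fin.le_castSucc_iff.2 hij
      have hstep : f j.castSucc ≤ f j.succ := by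
        rcases h j with h | h
        · exact h.le
        · exact h.1.le
      have hstep2 : f j.castSucc = f j.succ →
          ((pos (f j.succ) → π j.castSucc < π j.succ) ∧
            (¬ pos (f j.succ) → π j.succ < π j.castSucc)) := by
        intro he
        rcases h j with h | h
        · exact absurd he h.ne
        · have h2 := h.2
          rw [DD_iff] at h2
          constructor
          · intro hp
            refine lt_of_le_of_ne (not_lt.1 (h2.1 hp)) ?_
            intro h5
            exact absurd (π.injective h5) (Fin.castSucc_lt_succ).ne
          · intro hp; by_contra h6; exact hp (h2.2 h6)
      rcases lt_or_eq_of_le hle with hlt | heq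
      · obtain ⟨h1, h2⟩ := ih hlt
        refine ⟨h1.trans hstep, ?_⟩
        intro he
        have e1 : f i = f j.castSucc := le_antisymm h1 (he ▸ hstep)
        have e2 : f j.castSucc = f j.succ := e1 ▸ he
        have a := h2 e1
        have b := hstep2 e2
        rw [← he] at b
        exact ⟨fun hp => (a.1 hp).trans (b.1 hp), fun hp => (b.2 hp).trans (a.2 hp)⟩
      · subst heq
        refine ⟨hstep, ?_⟩
        intro he
        have b := hstep2 he
        rw [← he] at b
        exact b

theorem chn_snoc (j N : ℕ) (pos D : ℕ → Prop) (g : Fin (j + 1) → Fin N) (a : Fin N) :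
    Chn (j+1) N pos D (Fin.snoc (α := fun _ => Fin N) g a) ↔ Chn j N pos D g ∧
      (g (Fin.last j) < a ∨ (g (Fin.last j) = a ∧ (pos a ↔ ¬ D j))) := by
  unfold Chn
  rw [Fin.forall_fin_succ']
  simp only [Fin.snoc_castSucc, Fin.succ_last, Fin.snoc_last, Fin.val_castSucc, Fin.val_last,
    Fin.succ_castSucc]

theorem chn_card_last (N : ℕ) (pos D : ℕ → Prop) (j : ℕ) : ∀ a : Fin N,
    (Finset.univ.filter fun f : Fin (j+1) → Fin N =>
      Chn j N pos D f ∧ f (Fin.last j) = a).card = cc pos D j a := by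
  induction j with
  | zero =>
    intro a
    rw [cc, Finset.card_eq_one]
    refine ⟨fun _ => a, ?_⟩
    ext f
    simp only [Finset.mem_filter, Finset.mem_univ, true_and, Finset.mem_singleton]
    constructor
    · rintro ⟨_, h⟩
      funext i
      rw [← h]; congr 1; exact Subsingleton.elim (α := Fin 1) _ _
    · rintro rfl
      exact ⟨fun i => i.elim0, rfl⟩
  | succ j ih =>
    intro a
    have key : (Finset.univ.filter fun f : Fin (j+1+1) → Fin N =>
        Chn (j+1) N pos D f ∧ f (Fin.last (j+1)) = a).card
        = (Finset.univ.filter fun g : Fin (j+1) → Fin N =>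
          Chn j N pos D g ∧ (g (Fin.last j) < a ∨
            (g (Fin.last j) = a ∧ (pos a ↔ ¬ D j)))).card := by
      symm
      apply Finset.card_bij (fun g _ => Fin.snoc (α := fun _ => Fin N) g a)
      · intro g hg
        simp only [Finset.mem_filter, Finset.mem_univ, true_and] at hg ⊢
        rw [chn_snoc]
        exact ⟨hg, by simp⟩
      · intro g _ g' _ h
        have := congrArg (Fin.init (α := fun _ => Fin N)) h
        simpa using this
      · intro f hf
        simp only [Finset.mem_filter, Finset.mem_univ, true_and] at hf
        refine ⟨Fin.init f, ?_, ?_⟩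
        · simp only [Finset.mem_filter, Finset.mem_univ, true_and]
          rw [← chn_snoc, ← hf.2, Fin.snoc_init_self]
          exact hf.1
        · rw [← hf.2, Fin.snoc_init_self]
    rw [key, Finset.card_eq_sum_card_fiberwise (f := fun g => g (Fin.last j)) (t := Finset.univ)
      (by intro x _; simp)]
    have h1 : ∀ b : Fin N, (Finset.filter (fun g : Fin (j+1) → Fin N => g (Fin.last j) = b)
        (Finset.univ.filter fun g : Fin (j+1) → Fin N =>
          Chn j N pos D g ∧ (g (Fin.last j) < a ∨
            (g (Fin.last j) = a ∧ (pos a ↔ ¬ D j))))).card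
        = (if (b:ℕ) < a then cc pos D j b else 0) +
          (if (b:ℕ) = a then (if (pos a ↔ ¬ D j) then cc pos D j a else 0) else 0) := by
      intro b
      rw [Finset.filter_filter]
      rcases lt_trichotomy b a with h | h | h
      · rw [if_pos (Fin.lt_def.1 h), if_neg (by have := Fin.lt_def.1 h; omega), add_zero, ← ih b]
        congr 1; ext g
        simp only [Finset.mem_filter, Finset.mem_univ, true_and]
        constructor
        · rintro ⟨h1, h2⟩; exact ⟨h1.1, h2⟩
        · rintro ⟨h1, h2⟩; exact ⟨⟨h1, Or.inl (h2 ▸ h)⟩, h2⟩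
      · subst h
        rw [if_neg (lt_irrefl _), if_pos rfl, zero_add]
        by_cases hp : (pos b ↔ ¬ D j)
        · rw [if_pos hp, ← ih b]
          congr 1; ext g
          simp only [Finset.mem_filter, Finset.mem_univ, true_and]
          constructor
          · rintro ⟨h1, h2⟩; exact ⟨h1.1, h2⟩
          · rintro ⟨h1, h2⟩; exact ⟨⟨h1, Or.inr ⟨h2, hp⟩⟩, h2⟩
        · rw [if_neg hp, Finset.card_eq_zero]
          ext g
          simp only [Finset.mem_filter, Finset.mem_univ, true_and, Finset.notMem_empty, iff_false]
          rintro ⟨⟨_, h1 | h1⟩, h2⟩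
          · exact absurd h2 h1.ne
          · exact hp h1.2
      · rw [if_neg (by have := Fin.lt_def.1 h; omega),
          if_neg (by have := Fin.lt_def.1 h; omega), Finset.card_eq_zero]
        ext g
        simp only [Finset.mem_filter, Finset.mem_univ, true_and, Finset.notMem_empty, iff_false]
        rintro ⟨⟨_, h1 | h1⟩, h2⟩
        · exact absurd (h2 ▸ h1) (not_lt.2 h.le)
        · exact absurd (h2.symm.trans h1.1) h.ne'
    rw [Finset.sum_congr rfl (fun b _ => h1 b), Finset.sum_add_distrib, cc]
    congr 1
    · rw [Fin.sum_univ_eq_sum_range (fun b => if b < (a:ℕ) then cc pos D j b else 0) N,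
        ← Finset.sum_filter]
      apply Finset.sum_congr _ (fun _ _ => rfl)
      ext x; simp; have := a.2; omega
    · rw [Fin.sum_univ_eq_sum_range (fun b => if b = (a:ℕ) then
        (if (pos a ↔ ¬ D j) then cc pos D j a else 0) else 0) N, Finset.sum_ite_eq']
      simp

theorem chn_card (N : ℕ) (pos D : ℕ → Prop) (j : ℕ) :
    (Finset.univ.filter fun f : Fin (j+1) → Fin N => Chn j N pos D f).card
      = ∑ m ∈ Finset.range N, cc pos D j m := by
  rw [Finset.card_eq_sum_card_fiberwise (f := fun g => g (Fin.last j)) (t := Finset.univ)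
      (by intro x _; simp)]
  rw [← Fin.sum_univ_eq_sum_range]
  apply Finset.sum_congr rfl
  intro b _
  rw [Finset.filter_filter, chn_card_last]

theorem comp_card (n N : ℕ) (pos : ℕ → Prop) (π : Equiv.Perm (Fin (n+1))) :
    (Finset.univ.filter fun f : Fin (n+1) → Fin N => Comp (n+1) N pos π f).card
      = ∑ m ∈ Finset.range N, cc pos (DD (n+1) π) n m := by
  rw [← chn_card]
  congr 1; ext f; simp [comp_iff]

def SS (N : ℕ → ℕ) (pos D : ℕ → Prop) (j : ℕ) : PowerSeries ℚ :=
  PowerSeries.mk fun k => ((∑ m ∈ Finset.range (N k), cc pos D j m : ℕ) : ℚ)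

def posT : ℕ → Prop := fun _ => True
def posO : ℕ → Prop := fun m => Odd m

open PowerSeries in
theorem one_sub_X_mul_eq (f g : ℕ → ℚ) (h0 : f 0 = 0) (h : ∀ k, f (k+1) = f k + g k) :
    (1 - X) * PowerSeries.mk f = X * PowerSeries.mk g := by
  ext k
  cases k with
  | zero => simp [sub_mul, h0]
  | succ k => simp [sub_mul, coeff_succ_X_mul, h]

open PowerSeries in
theorem mk_shift (f g : ℕ → ℚ) (h0 : f 0 = 0) (h : ∀ k, g k = f (k+1)) :
    X * PowerSeries.mk g = PowerSeries.mk f := by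
  ext k
  cases k with
  | zero => simp [h0]
  | succ k => simp [coeff_succ_X_mul, h]

def cT (D : ℕ → Prop) (j : ℕ) : PowerSeries ℚ := PowerSeries.mk fun k => (cc posT D j k : ℚ)
def cN (D : ℕ → Prop) (j : ℕ) : PowerSeries ℚ := PowerSeries.mk fun k => (cc posO D j (2*k) : ℚ)
def cP (D : ℕ → Prop) (j : ℕ) : PowerSeries ℚ := PowerSeries.mk fun k => (cc posO D j (2*k+1) : ℚ)

open PowerSeries in
theorem SS_T_step (D : ℕ → Prop) (j : ℕ) :
    (1 - X) * SS (fun k => k) posT D j = X * cT D j := by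
  apply one_sub_X_mul_eq
  · simp
  · intro k; simp [Finset.sum_range_succ]

open PowerSeries in
theorem SS_O_step (D : ℕ → Prop) (j : ℕ) :
    (1 - X) * SS (fun k => 2*k) posO D j = X * (cN D j + cP D j) := by
  have : cN D j + cP D j = PowerSeries.mk fun k => 
      ((cc posO D j (2*k) : ℚ) + (cc posO D j (2*k+1) : ℚ)) := by
    ext k; simp [cN, cP]
  rw [this]
  apply one_sub_X_mul_eq
  · simp
  · intro k; beta_reduce; rw [show 2*(k+1) = 2*k+1+1 by ring]; simp [Finset.sum_range_succ]; ring

open PowerSeries in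
theorem one_mk : (1 - X) * (PowerSeries.mk fun _ => (1:ℚ)) = 1 := by
  have := PowerSeries.mk_one_mul_one_sub_eq_one ℚ
  rw [mul_comm]; exact this

open PowerSeries in
theorem T_formula (D : ℕ → Prop) (j : ℕ) :
    (1 - X) ^ (j + 2) * SS (fun k => k) posT D j
      = X ^ (((Finset.range j).filter D).card + 1) := by
  induction j with
  | zero =>
    have h := SS_T_step D 0
    have h2 : cT D 0 = PowerSeries.mk fun _ => (1:ℚ) := by simp [cT, cc]
    rw [h2] at h
    simp only [zero_add, pow_two, mul_assoc, h]
    rw [mul_left_comm, one_mk]; simp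
  | succ j ih =>
    have h := SS_T_step D (j+1)
    rw [Finset.range_add_one, Finset.filter_insert]
    by_cases hD : D j
    · have h2 : cT D (j+1) = SS (fun k => k) posT D j := by
        ext k; simp [cT, SS, cc, posT, hD]
      rw [if_pos hD, Finset.card_insert_of_notMem (by simp), pow_succ X, ← ih,
        show j + 1 + 2 = (j + 2) + 1 by ring, pow_succ, mul_assoc, h, h2]
      ring
    · have h2 : X * cT D (j+1) = SS (fun k => k) posT D j := by
        apply mk_shift
        · simp
        · intro k; simp [cc, posT, hD, Finset.sum_range_succ]
      rw [if_neg hD, ← ih, show j + 1 + 2 = (j + 2) + 1 by ring, pow_succ, mul_assoc, h, h2]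

def pkD (D : ℕ → Prop) (j : ℕ) : ℕ :=
  ((Finset.range j).filter fun i => 1 ≤ i ∧ ¬ D (i-1) ∧ D i).card

theorem pkD_succ (D : ℕ → Prop) (j : ℕ) :
    pkD D (j+1) = pkD D j + if (1 ≤ j ∧ ¬ D (j-1) ∧ D j) then 1 else 0 := by
  unfold pkD
  rw [Finset.range_add_one, Finset.filter_insert]
  split_ifs
  · rw [Finset.card_insert_of_notMem (by simp)]
  · simp

theorem pkD_le (D : ℕ → Prop) (j : ℕ) :
    2 * pkD D j + (if (1 ≤ j ∧ ¬ D (j-1)) then 1 else 0) ≤ j := by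
  induction j with
  | zero => simp [pkD]
  | succ j ih =>
    rw [pkD_succ]
    simp only [Nat.add_sub_cancel]
    by_cases hD : D j
    · by_cases h1 : (1 ≤ j ∧ ¬ D (j-1))
      · rw [if_pos h1] at ih
        simp [h1, hD]; omega
      · rw [if_neg h1] at ih
        rw [if_neg (by tauto), if_neg (by tauto)]; omega
    · simp [hD]; split_ifs at ih <;> omega

open PowerSeries in
theorem O_formula (D : ℕ → Prop) (j : ℕ) :
    (1 + X) ^ (2 * pkD D j) * ((1 - X) ^ (j + 2) * SS (fun k => 2*k) posO D j)
      = 2 * X * (4 * X) ^ (pkD D j) * (1 + X) ^ j ∧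
    (if (1 ≤ j ∧ ¬ D (j-1)) then (1 + X) * cN D j = (1 - X) * SS (fun k => 2*k) posO D j
      else 2 * X * cN D j = (1 - X) * SS (fun k => 2*k) posO D j) := by
  induction j with
  | zero =>
    have h := SS_O_step D 0
    have h2 : cN D 0 = PowerSeries.mk fun _ => (1:ℚ) := by simp [cN, cc]
    have h3 : cP D 0 = PowerSeries.mk fun _ => (1:ℚ) := by simp [cP, cc]
    rw [h3, ← h2] at h
    constructor
    · have h4 := one_mk
      rw [← h2] at h4
      simp only [pkD, Finset.range_zero, Finset.filter_empty, Finset.card_empty, mul_zero, pow_zero,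
        one_mul, zero_add, mul_one, pow_two, mul_assoc, h]
      linear_combination 2 * X * h4
    · rw [if_neg (by omega), h]; ring
  | succ j ih =>
    obtain ⟨ih1, ih2⟩ := ih
    have h := SS_O_step D (j+1)
    have e : j + 1 + 2 = (j + 2) + 1 := by ring
    rw [pkD_succ]
    simp only [Nat.add_sub_cancel]
    by_cases hD : D j
    · have h2 : cN D (j+1) = SS (fun k => 2*k) posO D j + cN D j := by
        ext k; simp [cN, SS, cc, posO, hD]
      have h3 : cP D (j+1) = SS (fun k => 2*k) posO D j + cN D j := by
        ext k; simp [cP, cN, SS, cc, posO, hD, Finset.sum_range_succ]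
      rw [h2, h3] at h
      rw [h2]
      constructor
      · by_cases h1 : (1 ≤ j ∧ ¬ D (j-1))
        · rw [if_pos h1] at ih2
          rw [if_pos ⟨h1.1, h1.2, hD⟩, mul_add, pow_add, pow_succ (1 - X : PowerSeries ℚ) (j+2),
            pow_succ (4 * X : PowerSeries ℚ), pow_succ (1 + X : PowerSeries ℚ) j]
          set S := SS (fun k => 2*k) posO D j
          linear_combination (1+X)^(2 * pkD D j) * (1 + X)^2 * (1 - X)^(j+2) * h 
            + (1+X)^(2 * pkD D j) * (1 + X) * (1 - X)^(j+2) * 2 * X * ih2 + (1+X) * 4 * X * ih1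
        · rw [if_neg h1] at ih2
          rw [if_neg (by tauto), add_zero, e, pow_succ (1 - X : PowerSeries ℚ) (j+2),
            pow_succ (1 + X : PowerSeries ℚ) j]
          set S := SS (fun k => 2*k) posO D j
          linear_combination (1+X)^(2 * pkD D j) * (1 - X)^(j+2) * h 
            + (1+X)^(2 * pkD D j) * (1 - X)^(j+2) * ih2 + (1+X) * ih1
      · rw [if_neg (by tauto), h]; ring
    · have h2 : cN D (j+1) = SS (fun k => 2*k) posO D j := by
        ext k; simp [cN, SS, cc, posO, hD]
      have h3 : X * cP D (j+1) = SS (fun k => 2*k) posO D j := by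
        apply mk_shift
        · simp
        · intro k; beta_reduce; rw [show 2*(k+1) = 2*k+1+1 by ring]
          simp [cc, posO, hD, Finset.sum_range_succ]
      rw [mul_add, h2, h3] at h
      rw [h2]
      constructor
      · rw [if_neg (by tauto), add_zero, e, pow_succ (1 - X : PowerSeries ℚ) (j+2),
            pow_succ (1 + X : PowerSeries ℚ) j]
        set S := SS (fun k => 2*k) posO D j
        linear_combination (1+X)^(2 * pkD D j) * (1 - X)^(j+2) * h + (1+X) * ih1
      · rw [if_pos ⟨by omega, hD⟩, h]; ring

theorem des_eq (n : ℕ) (π : Equiv.Perm (Fin (n+1))) :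
    des (n+1) π = ((Finset.range n).filter (DD (n+1) π)).card := by
  unfold des
  symm
  apply Finset.card_bij (fun i _ => i + 1)
  · intro i hi
    simp [DD] at hi ⊢
    exact ⟨by omega, hi.2⟩
  · intro a _ b _ h; omega
  · intro b hb
    simp at hb
    refine ⟨b - 1, ?_, by omega⟩
    obtain ⟨⟨h1, h2⟩, h3⟩ := hb
    obtain ⟨c, rfl⟩ : ∃ c, b = c + 1 := ⟨b - 1, by omega⟩
    simp [DD]
    exact ⟨by omega, h3⟩

theorem pk_eq (n : ℕ) (π : Equiv.Perm (Fin (n+1))) :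
    pk (n+1) π = pkD (DD (n+1) π) n := by
  unfold pk pkD
  symm
  have key : ∀ c, c + 1 < n → ((oneLine (n+1) π (c+1) < oneLine (n+1) π (c+2)) ↔
      ¬ DD (n+1) π c) := by
    intro c hc
    unfold DD
    have : oneLine (n+1) π (c+1) ≠ oneLine (n+1) π (c+2) := by
      unfold oneLine
      rw [dif_pos (by omega), dif_pos (by omega)]
      intro h
      have h := π.injective (Fin.ext (Nat.succ_injective h))
      simp at h
    omega
  apply Finset.card_bij (fun i _ => i + 1)
  · intro i hi
    simp only [Finset.mem_filter, Finset.mem_range, Finset.mem_Icc] at hi ⊢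
    obtain ⟨h1, h2, h3, h4⟩ := hi
    obtain ⟨c, rfl⟩ : ∃ c, i = c + 1 := ⟨i - 1, by omega⟩
    exact ⟨by omega, (key c h1).2 h3, h4⟩
  · intro a _ b _ h; omega
  · intro b hb
    simp only [Finset.mem_filter, Finset.mem_Icc] at hb
    obtain ⟨⟨h1, h2⟩, h3, h4⟩ := hb
    obtain ⟨c, rfl⟩ : ∃ c, b = c + 2 := ⟨b - 2, by omega⟩
    refine ⟨c + 1, ?_, by omega⟩
    simp only [Finset.mem_filter, Finset.mem_range]
    exact ⟨by omega, by omega, (key c (by omega)).1 h3, h4⟩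

open PowerSeries in
theorem peak_gf (n : ℕ) (π : Equiv.Perm (Fin (n+1))) :
    (4 : PowerSeries ℚ) ^ (pk (n+1) π + 1) * X ^ (pk (n+1) π + 1)
              * (1 + X) ^ (n - 2 * pk (n+1) π)
    = 2 * (1 - X) ^ (n + 2) * PowerSeries.mk fun k =>
      (((Finset.univ.filter fun f : Fin (n+1) → Fin (2*k) => Comp (n+1) (2*k) posO π f).card : ℕ) : ℚ)
     := by
  have h := (O_formula (DD (n+1) π) n).1
  have h2 := pkD_le (DD (n+1) π) n
  simp only [comp_card]
  rw [pk_eq]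
  have h3 : (1 + X : PowerSeries ℚ) ^ (2 * pkD (DD (n+1) π) n) ≠ 0 := by
    apply pow_ne_zero
    intro h
    have := congrArg (PowerSeries.coeff 0) h
    simp at this
  apply mul_left_cancel₀ h3
  change _ = _ * (2 * (1 - X) ^ (n + 2) * SS (fun k => 2*k) posO (DD (n+1) π) n)
  have h4 : (1 + X : PowerSeries ℚ) ^ n = (1 + X : PowerSeries ℚ) ^ (2 * pkD (DD (n+1) π) n) * 
    (1 + X) ^ (n - 2 * pkD (DD (n+1) π) n) := by
    rw [← pow_add]; congr 1; omega
  rw [h4] at h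
  rw [mul_pow] at h
  linear_combination -2 * h

theorem comp_sort (n k : ℕ) (π : Equiv.Perm (Fin n)) (g : Fin n → Fin k) :
    Comp n k posT π (g ∘ π) ↔ π = Tuple.sort g := by
  rw [Tuple.eq_sort_iff]
  constructor
  · intro h
    refine ⟨?_, ?_⟩
    · intro i j hij
      rcases lt_or_eq_of_le hij with h1 | h1
      · exact (h i j h1).1
      · rw [h1]
    · intro i j hij he
      exact ((h i j hij).2 he).1 trivial
  · rintro ⟨h1, h2⟩ i j hij
    exact ⟨h1 hij.le, fun he => ⟨fun _ => h2 i j hij he, fun h => absurd trivial h⟩⟩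

theorem sum_comp_T (n k : ℕ) :
    ∑ π : Equiv.Perm (Fin n), (Finset.univ.filter fun f : Fin n → Fin k => Comp n k posT π f).card
      = k ^ n := by
  have h1 : ∀ π : Equiv.Perm (Fin n), 
      (Finset.univ.filter fun f : Fin n → Fin k => Comp n k posT π f).card
      = (Finset.univ.filter fun g : Fin n → Fin k => Tuple.sort g = π).card := by
    intro π
    symm
    apply Finset.card_bij (fun g _ => g ∘ π)
    · intro g hg
      simp only [Finset.mem_filter, Finset.mem_univ, true_and] at hg ⊢
      rw [comp_sort]; exact hg.symm
    · intro a _ b _ h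
      funext x
      have := congrFun h (π.symm x)
      simpa using this
    · intro f hf
      simp only [Finset.mem_filter, Finset.mem_univ, true_and] at hf
      have e : (f ∘ π.symm) ∘ π = f := by funext x; simp
      refine ⟨f ∘ π.symm, ?_, e⟩
      simp only [Finset.mem_filter, Finset.mem_univ, true_and]
      symm
      rw [← comp_sort, e]; exact hf
  rw [Finset.sum_congr rfl (fun π _ => h1 π), ← Finset.card_eq_sum_card_fiberwise (by intro x _; simp)]
  simp

open PowerSeries in
theorem eulerian_gf (m : ℕ) (hm : 1 ≤ m) :
    ((eulerianA m : Polynomial ℚ) : PowerSeries ℚ)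
      = (1 - X) ^ (m + 1) * PowerSeries.mk fun k => (k : ℚ) ^ m := by
  obtain ⟨n, rfl⟩ : ∃ n, m = n + 1 := ⟨m - 1, by omega⟩
  have h0 : (PowerSeries.mk fun k => (k : ℚ) ^ (n+1)) =
      ∑ π : Equiv.Perm (Fin (n+1)), SS (fun k => k) posT (DD (n+1) π) n := by
    ext k
    rw [map_sum]
    simp only [SS, PowerSeries.coeff_mk, ← comp_card]
    rw [← Nat.cast_sum, sum_comp_T]
    simp
  rw [h0, Finset.mul_sum, eulerianA]
  rw [← Polynomial.coeToPowerSeries.ringHom_apply, map_sum]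
  apply Finset.sum_congr rfl
  intro π _
  rw [T_formula, des_eq]
  simp

theorem cyc_iff0 (n : ℕ) (hn : 1 ≤ n) (π : Equiv.Perm (Fin n)) :
    IsCyclicPerm n π ↔ π.IsCycleOn (Finset.univ : Finset (Fin n)) := by
    unfold IsCyclicPerm fullCycleType
    rcases Nat.lt_or_ge 1 n with h1 | h1
    · constructor
      · intro h
        have hc : π.cycleType = {n} := by
          have hle : π.cycleType ≤ {n} := by rw [← h]; exact Multiset.le_add_right _ _
          rcases Multiset.le_singleton.1 hle with h2 | h2
          · rw [h2, zero_add] at h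
            have := congrArg Multiset.card h
            rw [Multiset.card_replicate, Multiset.card_singleton] at this
            rw [this] at h
            have : n ∈ Multiset.replicate 1 1 := by rw [h]; simp
            simp at this; omega
          · exact h2
        have hcyc : π.IsCycle := by
          rw [← Equiv.Perm.card_cycleType_eq_one, hc]; simp
        have hs : π.support = Finset.univ := by
          apply Finset.eq_univ_of_card
          rw [← Equiv.Perm.sum_cycleType, hc]; simp
        have h3 := hcyc.isCycleOn
        convert h3 using 1
        ext x; simp
        have : x ∈ π.support := by rw [hs]; simp
        simpa using this
      · intro h
        have hnt : (Finset.univ : Finset (Fin n)).Nontrivial := by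
          rw [← Finset.one_lt_card_iff_nontrivial]; simpa using h1
        have hsup : π.support = Finset.univ := by
          ext x; simp
          exact h.apply_ne hnt (by simp)
        have hc : π.IsCycle := by
          have := Equiv.Perm.isCycle_iff_exists_isCycleOn.2
            ⟨(Finset.univ : Finset (Fin n)), by simpa using hnt, h, by simp⟩
          exact this
        rw [hc.cycleType, hsup]; simp
    · have : n = 1 := by omega
      subst this
      have e : π = 1 := Subsingleton.elim _ _
      subst e
      simp

theorem cyc_iff (n : ℕ) (hn : 1 ≤ n) (π : Equiv.Perm (Fin n)) :
    IsCyclicPerm n π ↔ ∀ x y, ∃ j : ℕ, (π ^ j) x = y := by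
  rw [cyc_iff0 n hn]
  constructor
  · intro h x y
    obtain ⟨j, _, hj⟩ := h.exists_pow_eq (Finset.mem_univ x) (Finset.mem_univ y)
    exact ⟨j, hj⟩
  · intro h
    refine ⟨by simp, ?_⟩
    intro x _ y _
    obtain ⟨j, hj⟩ := h x y
    exact ⟨j, by simpa using hj⟩

section words
variable {A : Type*}

def shf (w : ℕ → A) : ℕ → A := fun x => w (x + 1)

def mp (w : ℕ → A) : ℕ := Function.minimalPeriod shf w

theorem shf_iter (w : ℕ → A) (t : ℕ) : shf^[t] w = fun x => w (x + t) := by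
  induction t with
  | zero => rfl
  | succ t ih => rw [Function.iterate_succ_apply', ih]; funext x; simp [shf]; congr 1; ring

theorem mp_dvd (w : ℕ → A) (t : ℕ) : mp w ∣ t ↔ ∀ x, w (x + t) = w x := by
  unfold mp
  rw [← Function.isPeriodicPt_iff_minimalPeriod_dvd, Function.IsPeriodicPt, Function.IsFixedPt,
    shf_iter, funext_iff]

theorem per_mul {w : ℕ → A} {t : ℕ} (h : ∀ x, w (x + t) = w x) (c x : ℕ) : w (x + c * t) = w x := by
  have : mp w ∣ c * t := ((mp_dvd w t).2 h).mul_left c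
  exact (mp_dvd w _).1 this x

theorem per_mod {w : ℕ → A} {t : ℕ} (h : ∀ x, w (x + t) = w x) (x : ℕ) : w (x % t) = w x := by
  conv_rhs => rw [← Nat.mod_add_div x t, mul_comm]
  rw [per_mul h]

theorem per_of_eq {w : ℕ → A} {n : ℕ} (hn : 1 ≤ n) (h : ∀ x, w (x + n) = w x) {x d : ℕ}
    (he : ∀ r, w (x + r) = w (x + d + r)) : mp w ∣ d := by
  rw [mp_dvd]
  intro y
  have hx : ∃ c, x ≤ c * n := ⟨x, Nat.le_mul_of_pos_right x hn⟩
  obtain ⟨c, hc⟩ := hx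
  have := he (y + c * n - x)
  rw [show x + (y + c * n - x) = y + c * n by omega,
    show x + d + (y + c * n - x) = (y + d) + c * n by omega, per_mul h, per_mul h] at this
  exact this.symm

def wEquiv (A : Type*) (n : ℕ) (hn : 1 ≤ n) : {w : ℕ → A // ∀ x, w (x + n) = w x} ≃ (Fin n → A) where
  toFun w := fun i => w.1 i
  invFun g := ⟨fun x => g ⟨x % n, Nat.mod_lt _ hn⟩, by intro x; simp⟩
  left_inv w := by ext x; simp [per_mod w.2]
  right_inv g := by funext i; simp [Nat.mod_eq_of_lt i.2]

end words

def sgn (a : ℕ) : ℤ := if Odd a then 1 else -1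

def sg {N : ℕ} (w : ℕ → Fin N) (t : ℕ) : ℤ := ∏ i ∈ Finset.range t, sgn (w i)

theorem sgn_cases (a : ℕ) : sgn a = 1 ∨ sgn a = -1 := by unfold sgn; split_ifs <;> simp

theorem prod_sgn_cases {ι : Type*} (s : Finset ι) (g : ι → ℕ) :
    ∏ i ∈ s, sgn (g i) = 1 ∨ ∏ i ∈ s, sgn (g i) = -1 := by
  induction s using Finset.induction_on with
  | empty => simp
  | insert a s ha ih =>
    rw [Finset.prod_insert ha]
    rcases sgn_cases (g a) with h | h <;> rcases ih with h' | h' <;> rw [h, h'] <;> simp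

theorem sg_mul {N : ℕ} (w : ℕ → Fin N) (m e : ℕ) (h : ∀ x, w (x + m) = w x) :
    sg w (e * m) = sg w m ^ e := by
  induction e with
  | zero => simp [sg]
  | succ e ih =>
    rw [pow_succ, ← ih, add_mul, one_mul]
    unfold sg
    rw [Finset.prod_range_add]
    congr 1
    apply Finset.prod_congr rfl
    intro i _
    rw [add_comm, per_mul h]

theorem sum_sgn (k : ℕ) : ∑ a : Fin (2*k), sgn a = 0 := by
  rw [Fin.sum_univ_eq_sum_range]
  induction k with
  | zero => simp
  | succ k ih =>
    rw [show 2*(k+1) = 2*k+1+1 by ring, Finset.sum_range_succ, Finset.sum_range_succ, ih]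
    have h1 : ¬ Odd (2*k) := by simp
    have h2 : Odd (2*k+1) := ⟨k, rfl⟩
    rw [sgn, sgn, if_neg h1, if_pos h2]; rfl

theorem half_neg (k m : ℕ) (hm : 1 ≤ m) :
    2 * (Finset.univ.filter fun g : Fin m → Fin (2*k) => ∏ i, sgn (g i) = -1).card = (2*k)^m := by
  have h1 : ∑ g : Fin m → Fin (2*k), ∏ i, sgn (g i) = 0 := by
    rw [← Fintype.sum_pow (fun a : Fin (2*k) => sgn a) m, sum_sgn]
    exact zero_pow (by omega)
  have h2 : ∀ g : Fin m → Fin (2*k), ∏ i, sgn (g i) =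
      1 - 2 * (if ∏ i, sgn (g i) = -1 then 1 else 0) := by
    intro g
    rcases prod_sgn_cases Finset.univ (fun i => (g i : ℕ)) with h | h <;> rw [h] <;> simp
  rw [Finset.sum_congr rfl (fun g _ => h2 g), Finset.sum_sub_distrib, ← Finset.mul_sum,
    Finset.sum_boole] at h1
  simp at h1
  zify
  linarith

def Wd (N n : ℕ) : Finset (ℕ → Fin N) :=
  if hn : 1 ≤ n then Finset.univ.image (fun g => ((wEquiv (Fin N) n hn).symm g).1) else ∅

theorem mem_Wd {N n : ℕ} (hn : 1 ≤ n) (w : ℕ → Fin N) : w ∈ Wd N n ↔ mp w ∣ n := by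
  rw [mp_dvd, Wd, dif_pos hn, Finset.mem_image]
  constructor
  · rintro ⟨g, _, rfl⟩
    exact ((wEquiv (Fin N) n hn).symm g).2
  · intro h
    exact ⟨wEquiv (Fin N) n hn ⟨w, h⟩, Finset.mem_univ _, by rw [Equiv.symm_apply_apply]⟩

theorem card_Wd {N n : ℕ} (hn : 1 ≤ n) : (Wd N n).card = N ^ n := by
  rw [Wd, dif_pos hn, Finset.card_image_of_injective]
  · simp
  · exact Subtype.val_injective.comp (Equiv.injective _)

theorem card_neg (k m : ℕ) (hm : 1 ≤ m) :
    2 * ((Wd (2*k) m).filter fun w => sg w m = -1).card = (2*k)^m := by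
  rw [← half_neg k m hm]
  congr 1
  symm
  apply Finset.card_bij (fun g _ => ((wEquiv (Fin (2*k)) m hm).symm g).1)
  · intro g hg
    simp only [Finset.mem_filter, Finset.mem_univ, true_and] at hg ⊢
    refine ⟨(mem_Wd hm _).2 ((mp_dvd _ _).2 ((wEquiv (Fin (2*k)) m hm).symm g).2), ?_⟩
    rw [← hg, sg, ← Fin.prod_univ_eq_prod_range (fun i => sgn (((wEquiv (Fin (2*k)) m hm).symm g).1 i))]
    apply Finset.prod_congr rfl
    intro i _
    simp [wEquiv, Nat.mod_eq_of_lt i.2]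
  · intro a _ b _ h
    exact (wEquiv (Fin (2*k)) m hm).symm.injective (Subtype.ext h)
  · intro w hw
    simp only [Finset.mem_filter] at hw
    have hp := (mp_dvd _ _).1 ((mem_Wd hm _).1 hw.1)
    refine ⟨wEquiv (Fin (2*k)) m hm ⟨w, hp⟩, ?_, by rw [Equiv.symm_apply_apply]⟩
    simp only [Finset.mem_filter, Finset.mem_univ, true_and]
    rw [← hw.2, sg, ← Fin.prod_univ_eq_prod_range (fun i => sgn (w i))]
    rfl

def TT (k n : ℕ) : ℕ := ((Wd (2*k) n).filter fun w => mp w = n).card +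
  2 * ((Wd (2*k) n).filter fun w => 2 * mp w = n ∧ sg w (mp w) = -1).card

theorem TT_sum (k a q : ℕ) (hq : Odd q) :
    ∑ d ∈ q.divisors, TT k (2^a * d) = (2*k)^(2^a * q) := by
  have hq0 : 0 < q := hq.pos
  have ha : 0 < 2^a := by positivity
  have hn : 1 ≤ 2^a * q := Nat.mul_pos ha hq0
  unfold TT
  rw [Finset.sum_add_distrib, ← Finset.mul_sum]
  have e1 : ∑ d ∈ q.divisors, ((Wd (2*k) (2^a*d)).filter fun w => mp w = 2^a*d).card
      = ((Wd (2*k) (2^a*q)).filter fun w => 2^a ∣ mp w).card := by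
    rw [Finset.card_eq_sum_card_fiberwise (f := fun w => mp w / 2^a) (t := q.divisors)]
    · apply Finset.sum_congr rfl
      intro d hd
      have hd1 : d ∣ q := Nat.dvd_of_mem_divisors hd
      have hd0 : 0 < d := Nat.pos_of_mem_divisors hd
      congr 1
      ext w
      rw [Finset.filter_filter, Finset.mem_filter, Finset.mem_filter,
        mem_Wd (Nat.mul_pos ha hd0), mem_Wd hn]
      constructor
      · rintro ⟨_, h2⟩
        refine ⟨h2 ▸ Nat.mul_dvd_mul_left _ hd1, h2 ▸ Dvd.intro _ rfl, ?_⟩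
        rw [h2]; exact Nat.mul_div_cancel_left _ ha
      · rintro ⟨_, h2, h3⟩
        have : mp w = 2^a * d := by rw [← h3, Nat.mul_div_cancel' h2]
        exact ⟨this ▸ dvd_rfl, this⟩
    · intro w hw
      simp only [Finset.coe_filter, Set.mem_ofPred_eq, mem_Wd hn] at hw
      obtain ⟨h1, c, h2⟩ := hw
      rw [h2] at h1
      simp only [h2, Nat.mul_div_cancel_left _ ha, Finset.mem_coe, Nat.mem_divisors]
      exact ⟨Nat.dvd_of_mul_dvd_mul_left ha h1, hq0.ne'⟩
  rw [e1]
  have e2 : ((Wd (2*k) (2^a*q)).filter fun w => ¬ 2^a ∣ mp w).card =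
      2 * ∑ d ∈ q.divisors, ((Wd (2*k) (2^a*d)).filter fun w => 2 * mp w = 2^a*d ∧ sg w (mp w) = -1).card := by
    cases a with
    | zero =>
      simp only [pow_zero, one_mul, isUnit_one, IsUnit.dvd, not_true_eq_false, Finset.filter_false,
        Finset.card_empty]
      symm
      rw [Nat.mul_eq_zero]; right
      apply Finset.sum_eq_zero
      intro d hd
      rw [Finset.card_eq_zero, Finset.filter_eq_empty_iff]
      rintro w _ ⟨h, _⟩
      have : Odd d := Odd.of_dvd_nat hq (Nat.dvd_of_mem_divisors hd)
      obtain ⟨c, hc⟩ := this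
      omega
    | succ b =>
      have hb : 0 < 2^b := by positivity
      have hm : 1 ≤ 2^b * q := Nat.mul_pos hb hq0
      have f1 : ((Wd (2*k) (2^(b+1)*q)).filter fun w => ¬ 2^(b+1) ∣ mp w) = Wd (2*k) (2^b*q) := by
        ext w
        rw [Finset.mem_filter, mem_Wd hn, mem_Wd hm]
        constructor
        · rintro ⟨h1, h2⟩
          obtain ⟨u, v, hu, hv, huv⟩ := (Nat.dvd_mul).1 h1
          obtain ⟨i, hi, rfl⟩ := (Nat.dvd_prime_pow Nat.prime_two).1 hu
          have : i ≠ b + 1 := by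
            rintro rfl
            exact h2 (huv ▸ Dvd.intro _ rfl)
          rw [← huv]
          exact Nat.mul_dvd_mul (pow_dvd_pow 2 (by omega)) hv
        · intro h
          refine ⟨h.trans (Nat.mul_dvd_mul_right (pow_dvd_pow 2 (by omega)) _), ?_⟩
          intro h2
          have h3 := h2.trans h
          rw [pow_succ] at h3
          have h4 := Nat.dvd_of_mul_dvd_mul_left hb h3
          exact (Nat.not_even_iff_odd.2 hq) (even_iff_two_dvd.2 h4)
      rw [f1, card_Wd hm, ← card_neg k _ hm]
      congr 1
      rw [Finset.card_eq_sum_card_fiberwise (f := fun w => mp w / 2^b) (t := q.divisors)]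
      · apply Finset.sum_congr rfl
        intro d hd
        have hd1 : d ∣ q := Nat.dvd_of_mem_divisors hd
        have hd0 : 0 < d := Nat.pos_of_mem_divisors hd
        congr 1
        ext w
        rw [Finset.filter_filter, Finset.mem_filter, Finset.mem_filter,
          mem_Wd (Nat.mul_pos ha hd0), mem_Wd hm]
        constructor
        · rintro ⟨h1, h2, h3⟩
          obtain ⟨e, he⟩ := h1
          have hper := (mp_dvd w _).1 (dvd_refl (mp w))
          have h4 : mp w = 2^b * d := by
            have h5 : mp w ∣ 2^b * q := ⟨e, he⟩
            have h6 := sg_mul w (mp w) e hper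
            rw [mul_comm e, ← he, h2] at h6
            have hs := prod_sgn_cases (Finset.range (mp w)) (fun i => (w i : ℕ))
            change sg w (mp w) = 1 ∨ sg w (mp w) = -1 at hs
            have hodd : Odd e := by
              by_contra hne
              rw [Nat.not_odd_iff_even] at hne
              rcases hs with hs | hs
              · rw [hs, one_pow] at h6; norm_num at h6
              · rw [hs, hne.neg_one_pow] at h6; norm_num at h6
            have h7 : 2^b ∣ mp w := by
              have : 2^b ∣ mp w * e := he ▸ Dvd.intro _ rfl
              exact (Nat.Coprime.pow_left b ((Nat.coprime_two_left).2 hodd)).dvd_of_dvd_mul_right this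
            rw [← h3, Nat.mul_div_cancel' h7]
          rw [pow_succ]
          refine ⟨⟨2, by rw [h4]; ring⟩, by rw [h4]; ring, ?_⟩
          have h6 := sg_mul w (mp w) e hper
          rw [mul_comm e, ← he, h2] at h6
          have hs := prod_sgn_cases (Finset.range (mp w)) (fun i => (w i : ℕ))
          change sg w (mp w) = 1 ∨ sg w (mp w) = -1 at hs
          rcases hs with hs | hs
          · rw [hs, one_pow] at h6; norm_num at h6
          · exact hs
        · rintro ⟨h1, h2, h3⟩
          have h4 : mp w = 2^b * d := by
            rw [pow_succ] at h2; linarith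
          obtain ⟨e, rfl⟩ := hd1
          have hper := (mp_dvd w _).1 (dvd_refl (mp w))
          refine ⟨⟨e, by rw [h4]; ring⟩, ?_, ?_⟩
          · have h6 := sg_mul w (mp w) e hper
            have hodd : Odd e := Odd.of_dvd_nat hq (Dvd.intro_left _ rfl)
            rw [show 2^b * (d * e) = e * mp w by rw [h4]; ring, h6, h3, hodd.neg_one_pow]
          · rw [h4, Nat.mul_div_cancel_left _ hb]
      · intro w hw
        simp only [Finset.coe_filter, Set.mem_ofPred_eq, mem_Wd hm] at hw
        obtain ⟨h1, h2⟩ := hw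
        simp only [Finset.mem_coe, Nat.mem_divisors]
        refine ⟨?_, hq0.ne'⟩
        by_cases h7 : 2^b ∣ mp w
        · obtain ⟨c, hc⟩ := h7
          rw [hc] at h1 ⊢
          rw [Nat.mul_div_cancel_left _ hb]
          exact Nat.dvd_of_mul_dvd_mul_left hb h1
        · exfalso
          obtain ⟨e, he⟩ := h1
          have hper := (mp_dvd w _).1 (dvd_refl (mp w))
          have h6 := sg_mul w (mp w) e hper
          rw [mul_comm e, ← he, h2] at h6
          have hs := prod_sgn_cases (Finset.range (mp w)) (fun i => (w i : ℕ))
          change sg w (mp w) = 1 ∨ sg w (mp w) = -1 at hs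
          have hodd : Odd e := by
            by_contra hne
            rw [Nat.not_odd_iff_even] at hne
            rcases hs with hs | hs
            · rw [hs, one_pow] at h6; norm_num at h6
            · rw [hs, hne.neg_one_pow] at h6; norm_num at h6
          have : 2^b ∣ mp w * e := he ▸ Dvd.intro _ rfl
          exact h7 ((Nat.Coprime.pow_left b ((Nat.coprime_two_left).2 hodd)).dvd_of_dvd_mul_right this)
  rw [← e2, ← card_Wd hn]
  exact Finset.card_filter_add_card_filter_not _

theorem TT_eq (k n : ℕ) (hn : 1 ≤ n) :
    (TT k n : ℚ) = ∑ d ∈ n.divisors.filter (fun d => Odd d),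
      ((ArithmeticFunction.moebius d : ℤ) : ℚ) * (2 * k : ℚ) ^ (n / d) := by
  obtain ⟨a, q, hq, rfl⟩ := Nat.exists_eq_two_pow_mul_odd (by omega : n ≠ 0)
  have h := (ArithmeticFunction.sum_eq_iff_sum_mul_moebius_eq_on (R := ℚ)
    (f := fun d => (TT k (2^a * d) : ℚ)) (g := fun d => (2 * k : ℚ)^(2^a * d)) {d | Odd d}
    (fun m n hmn hn => Odd.of_dvd_nat hn hmn)).1 (by
      intro m _ hm
      have := TT_sum k a m hm
      exact_mod_cast this) q hq.pos hq
  have hdiv : (2^a*q).divisors.filter (fun d => Odd d) = q.divisors := by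
    ext d
    simp only [Finset.mem_filter, Nat.mem_divisors]
    constructor
    · rintro ⟨⟨h1, _⟩, h2⟩
      refine ⟨?_, hq.pos.ne'⟩
      exact (Nat.Coprime.pow_right a ((Nat.coprime_two_right).2 h2)).dvd_of_dvd_mul_left h1
    · rintro ⟨h1, h2⟩
      exact ⟨⟨h1.mul_left _, by omega⟩, Odd.of_dvd_nat hq h1⟩
  rw [hdiv, ← h, Nat.sum_divisorsAntidiagonal
    (fun i j => ((ArithmeticFunction.moebius i : ℤ) : ℚ) * (2 * k : ℚ)^(2^a * j))]
  apply Finset.sum_congr rfl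
  intro d hd
  have hd1 : d ∣ q := Nat.dvd_of_mem_divisors hd
  rw [Nat.mul_div_assoc _ hd1]

def Good (n : ℕ) (ψ : ℕ → Fin n) : Prop :=
  (∀ x, ψ (x + n) = ψ x) ∧ ∀ x y, ψ x = ψ y → x % n = y % n

def WC {N : ℕ} {L : Type*} [LT L] (w : ℕ → Fin N) (ψ : ℕ → L) : Prop :=
  ∀ x y, ψ x < ψ y → w x ≤ w y ∧ (w x = w y →
    ((Odd (w x : ℕ) → ψ (x+1) < ψ (y+1)) ∧ (¬ Odd (w x : ℕ) → ψ (y+1) < ψ (x+1))))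

def Dis {n : ℕ} (ψ ψ' : ℕ → Fin n) (x y : ℕ) : Prop :=
  (ψ x < ψ y ∧ ψ' y < ψ' x) ∨ (ψ y < ψ x ∧ ψ' x < ψ' y)

theorem Dis.symm' {n : ℕ} {ψ ψ' : ℕ → Fin n} {x y : ℕ} (h : Dis ψ ψ' x y) : Dis ψ ψ' y x := by
  unfold Dis at *; tauto

theorem dis_step {n N : ℕ} {w : ℕ → Fin N} {ψ ψ' : ℕ → Fin n} (h : WC w ψ) (h' : WC w ψ')
    {x y : ℕ} (hd : Dis ψ ψ' x y) : w x = w y ∧ Dis ψ ψ' (x+1) (y+1) := by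
  have key : ∀ x y, ψ x < ψ y → ψ' y < ψ' x → w x = w y ∧ Dis ψ ψ' (x+1) (y+1) := by
    intro x y h1 h2
    obtain ⟨a1, a2⟩ := h x y h1
    obtain ⟨b1, b2⟩ := h' y x h2
    have e := le_antisymm a1 b1
    refine ⟨e, ?_⟩
    have a3 := a2 e
    have b3 := b2 e.symm
    rw [← e] at b3
    by_cases ho : Odd (w x : ℕ)
    · exact Or.inl ⟨a3.1 ho, b3.1 ho⟩
    · exact Or.inr ⟨a3.2 ho, b3.2 ho⟩
  rcases hd with ⟨h1, h2⟩ | ⟨h1, h2⟩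
  · exact key x y h1 h2
  · obtain ⟨a, b⟩ := key y x h1 h2
    exact ⟨a.symm, b.symm'⟩

theorem dis_all {n N : ℕ} {w : ℕ → Fin N} {ψ ψ' : ℕ → Fin n} (h : WC w ψ) (h' : WC w ψ')
    {x y : ℕ} (hd : Dis ψ ψ' x y) (r : ℕ) : w (x+r) = w (y+r) ∧ Dis ψ ψ' (x+r) (y+r) := by
  induction r with
  | zero => exact ⟨(dis_step h h' hd).1, hd⟩
  | succ r ih =>
    have := (dis_step h h' ih.2).2
    exact ⟨(dis_step h h' this).1, this⟩

theorem good_surj {n : ℕ} {ψ : ℕ → Fin n} (h : Good n ψ) (i : Fin n) :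
    ∃ x, x < n ∧ ψ x = i := by
  have hinj : Function.Injective (fun x : Fin n => ψ x) := by
    intro a b hab
    have := h.2 a b hab
    rw [Nat.mod_eq_of_lt a.2, Nat.mod_eq_of_lt b.2] at this
    exact Fin.ext this
  obtain ⟨x, hx⟩ := (Finite.surjective_of_injective hinj) i
  exact ⟨x, x.2, hx⟩

theorem good_rank {n : ℕ} (hn : 1 ≤ n) {ψ : ℕ → Fin n} (h : Good n ψ) (x : ℕ) :
    (ψ x : ℕ) = ((Finset.range n).filter fun y => ψ y < ψ x).card := by
  have : ((Finset.range n).filter fun y => ψ y < ψ x).image ψ = Finset.Iio (ψ x) := by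
    ext i
    simp only [Finset.mem_image, Finset.mem_filter, Finset.mem_range, Finset.mem_Iio]
    constructor
    · rintro ⟨a, ⟨_, h2⟩, rfl⟩; exact h2
    · intro hi
      obtain ⟨a, ha, rfl⟩ := good_surj h i
      exact ⟨a, ⟨ha, hi⟩, rfl⟩
  rw [← Fin.card_Iio, ← this, Finset.card_image_of_injOn]
  intro a ha b hb hab
  simp at ha hb
  have := h.2 a b hab
  rwa [Nat.mod_eq_of_lt ha.1, Nat.mod_eq_of_lt hb.1] at this

theorem good_per {n : ℕ} {ψ : ℕ → Fin n} (h : Good n ψ) {x y : ℕ} (e : x % n = y % n) :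
    ψ x = ψ y := by
  rw [← per_mod h.1 x, ← per_mod h.1 y, e]

theorem good_ext {n : ℕ} (hn : 1 ≤ n) {ψ ψ' : ℕ → Fin n} (h : Good n ψ) (h' : Good n ψ')
    (hd : ∀ x y, ¬ Dis ψ ψ' x y) : ψ = ψ' := by
  have key : ∀ x y, ψ x < ψ y ↔ ψ' x < ψ' y := by
    intro x y
    constructor
    · intro h1
      by_contra h2
      rcases lt_or_eq_of_le (not_lt.1 h2) with h3 | h3
      · exact hd x y (Or.inl ⟨h1, h3⟩)
      · exact h1.ne (good_per h (h'.2 _ _ h3).symm)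
    · intro h1
      by_contra h2
      rcases lt_or_eq_of_le (not_lt.1 h2) with h3 | h3
      · exact hd x y (Or.inr ⟨h3, h1⟩)
      · exact h1.ne (good_per h' (h.2 _ _ h3).symm)
  funext x
  apply Fin.ext
  rw [good_rank hn h, good_rank hn h']
  simp only [key]

theorem sign_transport {n N : ℕ} {w : ℕ → Fin N} {ψ : ℕ → Fin n} (h : WC w ψ) {x y : ℕ}
    (he : ∀ r, w (x+r) = w (y+r)) (hlt : ψ x < ψ y) (r : ℕ) :
    (∏ q ∈ Finset.range r, sgn (w (x+q)) = 1 → ψ (x+r) < ψ (y+r)) ∧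
    (∏ q ∈ Finset.range r, sgn (w (x+q)) = -1 → ψ (y+r) < ψ (x+r)) := by
  induction r with
  | zero => simp [hlt]
  | succ r ih =>
    rw [Finset.prod_range_succ]
    have e := he r
    rcases prod_sgn_cases (Finset.range r) (fun q => (w (x+q) : ℕ)) with h1 | h1
    · have h2 := (h _ _ (ih.1 h1)).2 e
      rw [h1, one_mul]
      by_cases ho : Odd (w (x+r) : ℕ)
      · rw [sgn, if_pos ho]
        exact ⟨fun _ => h2.1 ho, fun h => by norm_num at h⟩
      · rw [sgn, if_neg ho]
        exact ⟨fun h => by norm_num at h, fun _ => h2.2 ho⟩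
    · have h2 := (h _ _ (ih.2 h1)).2 e.symm
      rw [← e] at h2
      rw [h1]
      by_cases ho : Odd (w (x+r) : ℕ)
      · rw [sgn, if_pos ho]
        exact ⟨fun h => by norm_num at h, fun _ => h2.1 ho⟩
      · rw [sgn, if_neg ho]
        exact ⟨fun _ => h2.2 ho, fun h => by norm_num at h⟩

theorem pos_period {n N : ℕ} {w : ℕ → Fin N} {ψ : ℕ → Fin n} (hg : Good n ψ) (h : WC w ψ)
    (hn : 1 ≤ n) {t : ℕ} (ht : ∀ x, w (x+t) = w x) (hs : sg w t = 1) : n ∣ t := by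
  have hc : ∀ c, ∏ q ∈ Finset.range (c*t), sgn (w (0+q)) = 1 := by
    intro c
    have := sg_mul w t c ht
    rw [hs, one_pow] at this
    simpa [sg] using this
  have hc' : ∀ c, ∏ q ∈ Finset.range (c*t), sgn (w (t+q)) = 1 := by
    intro c
    rw [← hc c]
    apply Finset.prod_congr rfl
    intro q _
    rw [add_comm t, ht, zero_add]
  have hend : ψ (n * t) = ψ 0 := good_per hg (by simp)
  have : ψ 0 = ψ t := by
    by_contra hne
    rcases lt_or_gt_of_ne hne with h1 | h1
    · have hstep : ∀ c, ψ (c*t) < ψ ((c+1)*t) := by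
        intro c
        have := (sign_transport h (x := 0) (y := t)
          (fun r => by rw [zero_add, add_comm t, ht]) h1 (c*t)).1 (hc c)
        rw [zero_add] at this
        rwa [show (c+1)*t = t + c*t by ring]
      have hm := strictMono_nat_of_lt_succ hstep (show 0 < n by omega)
      simp only [zero_mul, hend] at hm
      exact lt_irrefl _ hm
    · have hstep : ∀ c, ψ ((c+1)*t) < ψ (c*t) := by
        intro c
        have := (sign_transport h (x := t) (y := 0)
          (fun r => by rw [zero_add, add_comm t, ht]) h1 (c*t)).1 (hc' c)
        rw [zero_add] at this
        rwa [show (c+1)*t = t + c*t by ring]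
      have hm := strictAnti_nat_of_succ_lt (f := fun c => ψ (c*t)) hstep (show 0 < n by omega)
      simp only [zero_mul, hend] at hm
      exact lt_irrefl _ hm
  have := hg.2 _ _ this
  exact Nat.dvd_of_mod_eq_zero (by rw [← this]; simp)

theorem necessary {n N : ℕ} {w : ℕ → Fin N} {ψ : ℕ → Fin n} (hg : Good n ψ) (h : WC w ψ)
    (hn : 1 ≤ n) (hw : mp w ∣ n) : mp w = n ∨ (2 * mp w = n ∧ sg w (mp w) = -1) := by
  have hper := (mp_dvd w _).1 (dvd_refl (mp w))
  have hs := prod_sgn_cases (Finset.range (mp w)) (fun i => (w i : ℕ))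
  change sg w (mp w) = 1 ∨ sg w (mp w) = -1 at hs
  rcases hs with hs | hs
  · left
    exact Nat.dvd_antisymm hw (pos_period hg h hn hper hs)
  · have h2 : n ∣ 2 * mp w := by
      apply pos_period hg h hn (per_mul hper 2)
      rw [sg_mul w _ _ hper, hs]; norm_num
    obtain ⟨c, hc⟩ := hw
    have hm : 0 < mp w := by
      rcases Nat.eq_zero_or_pos (mp w) with h | h
      · rw [h] at hc; omega
      · exact h
    have hle := Nat.le_of_dvd (by omega) h2
    have : c ≤ 2 := by
      rw [hc, mul_comm] at hle
      exact Nat.le_of_mul_le_mul_right hle hm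
    interval_cases c
    · omega
    · left; omega
    · right; exact ⟨by omega, hs⟩

theorem exists_of_key {n N : ℕ} {L : Type*} [LinearOrder L] (hn : 1 ≤ n) (w : ℕ → Fin N) (K : ℕ → L)
    (hp : ∀ x, K (x+n) = K x) (hi : ∀ x y, K x = K y → x % n = y % n) (hw : WC w K) :
    ∃ ψ : ℕ → Fin n, Good n ψ ∧ WC w ψ := by
  have hlt : ∀ x, ((Finset.range n).filter fun y => K y < K x).card < n := by
    intro x
    conv_rhs => rw [← Finset.card_range n]
    apply Finset.card_lt_card
    rw [Finset.filter_ssubset]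
    exact ⟨x % n, Finset.mem_range.2 (Nat.mod_lt _ hn), by rw [per_mod hp]; exact lt_irrefl _⟩
  have hmono : ∀ x y, K x < K y → ((Finset.range n).filter fun z => K z < K x).card <
      ((Finset.range n).filter fun z => K z < K y).card := by
    intro x y hxy
    apply Finset.card_lt_card
    rw [Finset.ssubset_iff_of_subset]
    · refine ⟨x % n, ?_, ?_⟩
      · simp only [Finset.mem_filter, Finset.mem_range, per_mod hp]
        exact ⟨Nat.mod_lt _ hn, hxy⟩
      · simp only [Finset.mem_filter, per_mod hp, lt_irrefl, and_false, not_false_eq_true]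
    · intro z
      simp only [Finset.mem_filter]
      exact fun h => ⟨h.1, h.2.trans hxy⟩
  have hiff : ∀ x y, ((Finset.range n).filter fun z => K z < K x).card <
      ((Finset.range n).filter fun z => K z < K y).card ↔ K x < K y := by
    intro x y
    refine ⟨?_, hmono x y⟩
    intro h
    by_contra h2
    rcases lt_or_eq_of_le (not_lt.1 h2) with h3 | h3
    · exact absurd (hmono _ _ h3) (by omega)
    · rw [h3] at h; omega
  refine ⟨fun x => ⟨_, hlt x⟩, ⟨?_, ?_⟩, ?_⟩
  · intro x; simp only [hp]
  · intro x y h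
    apply hi
    have h := congrArg Fin.val h
    simp only at h
    by_contra hne
    rcases lt_or_gt_of_ne hne with h3 | h3
    · have := hmono _ _ h3; omega
    · have := hmono _ _ h3; omega
  · intro x y
    simp only [Fin.mk_lt_mk, hiff]
    exact hw x y

theorem exists_K {N : ℕ} (w : ℕ → Fin N) :
    ∃ K : ℕ → ℝ, WC w K ∧ (∀ x y, K x = K y → w x = w y ∧ K (x+1) = K (y+1)) ∧
      (∀ t, mp w ∣ t → ∀ x, K (x+t) = K x) := by
  set ε : ℝ := 1 / (4 * N + 4) with hε
  have hε0 : 0 < ε := by positivity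
  have hε1 : ε ≤ 1/2 := by
    rw [hε]; apply one_div_le_one_div_of_le (by norm_num)
    have : (0:ℝ) ≤ N := Nat.cast_nonneg _
    linarith
  have hεN : ε * (4 * N) < 1 := by
    rw [hε, one_div_mul_eq_div, div_lt_one (by positivity)]; linarith
  set c : ℕ → ℕ → ℝ := fun x r =>
    ε ^ r * (((∏ q ∈ Finset.range r, sgn (w (x+q)) : ℤ) : ℝ) * ((w (x+r) : ℕ) : ℝ)) with hc
  have hb : ∀ x r, ‖c x r‖ ≤ N * (1/2)^r := by
    intro x r
    rw [hc, Real.norm_eq_abs, abs_mul, abs_mul]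
    have h1 : |((∏ q ∈ Finset.range r, sgn (w (x+q)) : ℤ) : ℝ)| = 1 := by
      rcases prod_sgn_cases (Finset.range r) (fun q => (w (x+q) : ℕ)) with h | h <;> rw [h] <;> simp
    have h2 : |((w (x+r) : ℕ) : ℝ)| ≤ N := by
      rw [abs_of_nonneg (Nat.cast_nonneg _)]
      exact_mod_cast (w (x+r)).2.le
    have h3 : |ε ^ r| ≤ (1/2)^r := by
      rw [abs_of_nonneg (by positivity)]
      exact pow_le_pow_left₀ hε0.le hε1 r
    rw [h1, one_mul, mul_comm]
    exact mul_le_mul h2 h3 (abs_nonneg _) (Nat.cast_nonneg _)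
  have hgeo : HasSum (fun r : ℕ => (N:ℝ) * (1/2)^r) (N * 2) := hasSum_geometric_two.mul_left _
  have hsum : ∀ x, Summable (c x) := fun x => Summable.of_norm_bounded hgeo.summable (hb x)
  set K : ℕ → ℝ := fun x => ∑' r, c x r with hK
  have hKb : ∀ x, |K x| ≤ 2 * N := by
    intro x
    have := tsum_of_norm_bounded hgeo (hb x)
    rw [Real.norm_eq_abs] at this
    linarith
  have hrec : ∀ x, K x = (w x : ℕ) + ε * (sgn (w x) : ℝ) * K (x+1) := by
    intro x
    simp only [hK]
    rw [(hsum x).tsum_eq_zero_add, ← tsum_mul_left]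
    congr 1
    · simp [hc]
    · apply tsum_congr
      intro r
      simp only [hc]
      rw [Finset.prod_range_succ', pow_succ]
      simp only [add_zero]
      have e : ∏ q ∈ Finset.range r, sgn (w (x + (q + 1))) =
          ∏ q ∈ Finset.range r, sgn (w (x + 1 + q)) := by
        apply Finset.prod_congr rfl
        intro q _
        rw [show x + (q + 1) = x + 1 + q by ring]
      rw [e, show x + (r + 1) = x + 1 + r by ring]
      push_cast
      ring
  have hs : ∀ a, |(sgn a : ℝ)| = 1 := by
    intro a; rcases sgn_cases a with h | h <;> rw [h] <;> simp
  have hterm : ∀ x, |ε * (sgn (w x) : ℝ) * K (x+1)| ≤ ε * (2 * N) := by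
    intro x
    rw [abs_mul, abs_mul, hs, mul_one, abs_of_pos hε0]
    exact mul_le_mul_of_nonneg_left (hKb _) hε0.le
  have hlt : ∀ x y, w x < w y → K x < K y := by
    intro x y h
    rw [hrec x, hrec y]
    have h1 : ((w x : ℕ) : ℝ) + 1 ≤ (w y : ℕ) := by exact_mod_cast h
    have h2 := abs_le.1 (hterm x)
    have h3 := abs_le.1 (hterm y)
    linarith [h2.1, h2.2, h3.1, h3.2]
  refine ⟨K, ?_, ?_, ?_⟩
  · intro x y h
    refine ⟨?_, ?_⟩
    · by_contra h2
      exact absurd (hlt _ _ (not_le.1 h2)) (not_lt.2 h.le)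
    · intro he
      rw [hrec x, hrec y, he] at h
      rw [he]
      have h4 := lt_of_add_lt_add_left h
      rw [mul_assoc, mul_assoc] at h4
      have h5 := lt_of_mul_lt_mul_left h4 hε0.le
      constructor
      · intro ho; rw [sgn, if_pos ho] at h5; simpa using h5
      · intro ho; rw [sgn, if_neg ho] at h5; simpa using h5
  · intro x y h
    have he : w x = w y := by
      rcases lt_trichotomy (w x) (w y) with h1 | h1 | h1
      · exact absurd h (hlt _ _ h1).ne
      · exact h1
      · exact absurd h (hlt _ _ h1).ne'
    refine ⟨he, ?_⟩
    rw [hrec x, hrec y, he] at h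
    have h4 := add_left_cancel h
    apply mul_left_cancel₀ _ h4
    apply mul_ne_zero hε0.ne'
    intro h0
    have := hs (w y)
    rw [h0] at this; simp at this
  · intro t ht x
    have hp := (mp_dvd w t).1 ht
    simp only [hK]
    apply tsum_congr
    intro r
    simp only [hc]
    have e : ∀ q, w (x + t + q) = w (x + q) := fun q => by
      rw [show x + t + q = (x + q) + t by ring, hp]
    simp only [e]

theorem K_all {N : ℕ} {w : ℕ → Fin N} {K : ℕ → ℝ}
    (h : ∀ x y, K x = K y → w x = w y ∧ K (x+1) = K (y+1)) {x y : ℕ} (he : K x = K y) (r : ℕ) :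
    w (x+r) = w (y+r) ∧ K (x+r) = K (y+r) := by
  induction r with
  | zero => exact ⟨(h _ _ he).1, he⟩
  | succ r ih =>
    have := (h _ _ ih.2).2
    exact ⟨(h _ _ this).1, this⟩

theorem sg_add {N : ℕ} (w : ℕ → Fin N) (t x : ℕ) (h : ∀ x, w (x + t) = w x) :
    sg w (x + t) = sg w t * sg w x := by
  unfold sg
  rw [add_comm, Finset.prod_range_add]
  congr 1
  apply Finset.prod_congr rfl
  intro i _
  rw [add_comm, h]

theorem sg_cases {N : ℕ} (w : ℕ → Fin N) (t : ℕ) : sg w t = 1 ∨ sg w t = -1 :=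
  prod_sgn_cases (Finset.range t) (fun i => (w i : ℕ))

theorem fiber_one {n N : ℕ} (hn : 1 ≤ n) (w : ℕ → Fin N) (hw : mp w = n) :
    {ψ : ℕ → Fin n | Good n ψ ∧ WC w ψ}.ncard = 1 := by
  have hper := (mp_dvd w n).1 (hw ▸ dvd_rfl)
  have hmod : ∀ x y, (∀ r, w (x+r) = w (y+r)) → x % n = y % n := by
    have key : ∀ x y, x ≤ y → (∀ r, w (x+r) = w (y+r)) → x % n = y % n := by
      intro x y hxy h
      obtain ⟨d, rfl⟩ := Nat.exists_eq_add_of_le hxy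
      have := per_of_eq hn hper h
      rw [hw] at this
      obtain ⟨c, rfl⟩ := this
      simp
    intro x y h
    rcases le_total x y with h1 | h1
    · exact key x y h1 h
    · exact (key y x h1 (fun r => (h r).symm)).symm
  obtain ⟨K, h1, h2, h3⟩ := exists_K w
  obtain ⟨ψ, hg, hc⟩ := exists_of_key hn w K (h3 n (hw ▸ dvd_rfl))
    (fun x y h => hmod x y (fun r => (K_all h2 h r).1)) h1
  rw [Set.ncard_eq_one]
  refine ⟨ψ, ?_⟩
  ext ψ'
  simp only [Set.mem_ofPred_eq, Set.mem_singleton_iff]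
  constructor
  · rintro ⟨hg', hc'⟩
    apply good_ext hn hg' hg
    intro x y hd
    have e := hmod x y (fun r => (dis_all hc' hc hd r).1)
    have := good_per hg e
    rcases hd with hd | hd
    · exact hd.2.ne this.symm
    · exact hd.2.ne this
  · rintro rfl; exact ⟨hg, hc⟩

theorem dis_zero {n N p : ℕ} (hn : 1 ≤ n) {w : ℕ → Fin N} (hp : mp w = p) (hnp : n = 2 * p)
    {ψ ψ' : ℕ → Fin n} (hg : Good n ψ) (hg' : Good n ψ') (hc : WC w ψ) (hc' : WC w ψ')
    {x y : ℕ} (hd : Dis ψ ψ' x y) : Dis ψ ψ' 0 p := by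
  have hper := (mp_dvd w n).1 (by rw [hp, hnp]; exact Dvd.intro_left _ rfl)
  have key : ∀ x y, x ≤ y → Dis ψ ψ' x y → Dis ψ ψ' 0 p := by
    intro x y hxy hd
    obtain ⟨d, rfl⟩ := Nat.exists_eq_add_of_le hxy
    have hdv := per_of_eq hn hper (fun r => (dis_all hc hc' hd r).1)
    rw [hp] at hdv
    obtain ⟨c, rfl⟩ := hdv
    have h1 := (dis_all hc hc' hd (n * x - x)).2
    have hx : x ≤ n * x := Nat.le_mul_of_pos_left x hn
    rw [show x + (n * x - x) = n * x by omega,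
      show x + p * c + (n * x - x) = p * c + n * x by omega] at h1
    rcases Nat.even_or_odd' c with ⟨e, rfl | rfl⟩
    · exfalso
      have e1 : ψ (p * (2 * e) + n * x) = ψ (n * x) := by
        apply good_per hg
        rw [show p * (2 * e) + n * x = n * (e + x) by rw [hnp]; ring]; simp
      rcases h1 with h1 | h1
      · exact h1.1.ne e1.symm
      · exact h1.1.ne e1
    · have m1 : (n * x) % n = 0 % n := by simp
      have m2 : (p * (2 * e + 1) + n * x) % n = p % n := by
        rw [show p * (2 * e + 1) + n * x = p + n * (e + x) by rw [hnp]; ring]; simp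
      unfold Dis at h1 ⊢
      rwa [good_per hg m1, good_per hg' m1, good_per hg m2, good_per hg' m2] at h1
  rcases le_total x y with h1 | h1
  · exact key x y h1 hd
  · exact key y x h1 hd.symm'

theorem fiber_two {n N : ℕ} (hn : 1 ≤ n) (w : ℕ → Fin N) (hw : 2 * mp w = n)
    (hs : sg w (mp w) = -1) :
    {ψ : ℕ → Fin n | Good n ψ ∧ WC w ψ}.ncard = 2 := by
  obtain ⟨p, hp⟩ : ∃ p, mp w = p := ⟨_, rfl⟩
  rw [hp] at hw hs
  have hpp := (mp_dvd w p).1 (hp ▸ dvd_rfl)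
  have hdn : mp w ∣ n := by rw [hp, ← hw]; exact Dvd.intro_left _ rfl
  have hper := (mp_dvd w n).1 hdn
  have hsn : sg w n = 1 := by rw [← hw, sg_mul w p 2 hpp, hs]; norm_num
  obtain ⟨K, h1, h2, h3⟩ := exists_K w
  have hmod : ∀ x y, x ≤ y → K x = K y → sg w x = sg w y → x % n = y % n := by
    intro x y hxy hk he
    obtain ⟨d, rfl⟩ := Nat.exists_eq_add_of_le hxy
    have hdv := per_of_eq hn hper (fun r => (K_all h2 hk r).1)
    rw [hp] at hdv
    obtain ⟨c, rfl⟩ := hdv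
    rw [sg_add w (p * c) x (by rw [mul_comm]; exact per_mul hpp c), mul_comm p c,
      sg_mul w p c hpp, hs] at he
    rcases Nat.even_or_odd' c with ⟨e, rfl | rfl⟩
    · rw [show p * (2 * e) = n * e by rw [← hw]; ring]; simp
    · exfalso
      rw [pow_succ, pow_mul] at he
      norm_num at he
      rcases sg_cases w x with h | h <;> rw [h] at he <;> norm_num at he
  have hex : ∃ ψ : ℕ → Fin n, Good n ψ ∧ WC w ψ := by
    apply exists_of_key (L := ℝ ×ₗ ℤ) hn w (fun x => toLex (K x, sg w x))
    · intro x
      rw [h3 n hdn, sg_add w n x hper, hsn, one_mul]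
    · intro x y h
      have h := toLex.injective h
      simp only [Prod.mk.injEq] at h
      rcases le_total x y with h1 | h1
      · exact hmod x y h1 h.1 h.2
      · exact (hmod y x h1 h.1.symm h.2.symm).symm
    · intro x y h
      simp only [Prod.Lex.toLex_lt_toLex] at h ⊢
      rcases h with h | ⟨h, h'⟩
      · obtain ⟨a, b⟩ := h1 x y h
        exact ⟨a, fun e => ⟨fun ho => Or.inl ((b e).1 ho), fun ho => Or.inl ((b e).2 ho)⟩⟩
      · obtain ⟨a, b⟩ := h2 x y h
        refine ⟨a.le, fun _ => ⟨fun ho => Or.inr ⟨b, ?_⟩, fun ho => Or.inr ⟨b.symm, ?_⟩⟩⟩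
        · unfold sg at h' ⊢
          rw [Finset.prod_range_succ, Finset.prod_range_succ, ← a, sgn, if_pos ho]
          linarith
        · unfold sg at h' ⊢
          rw [Finset.prod_range_succ, Finset.prod_range_succ, ← a, sgn, if_neg ho]
          linarith
  obtain ⟨ψ, hg, hc⟩ := hex
  have hg1 : Good n (fun x => ψ (x + p)) := by
    refine ⟨fun x => ?_, fun x y h => ?_⟩
    · change ψ (x + n + p) = ψ (x + p)
      rw [show x + n + p = x + p + n by ring, hg.1]
    · exact Nat.ModEq.add_right_cancel' p (hg.2 _ _ h)
  have hc1 : WC w (fun x => ψ (x + p)) := by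
    intro x y h
    have := hc _ _ h
    rw [hpp, hpp] at this
    beta_reduce
    rw [show x + 1 + p = x + p + 1 by ring, show y + 1 + p = y + p + 1 by ring]
    exact this
  rw [Set.ncard_eq_two]
  refine ⟨ψ, fun x => ψ (x + p), ?_, ?_⟩
  · intro h
    have := hg.2 _ _ (congrFun h 0)
    rw [zero_add, Nat.zero_mod, Nat.mod_eq_of_lt (by omega)] at this
    omega
  · ext ψ'
    simp only [Set.mem_ofPred_eq, Set.mem_insert_iff, Set.mem_singleton_iff]
    constructor
    · rintro ⟨hg', hc'⟩
      by_contra hne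
      push Not at hne
      have a1 : ∃ x y, Dis ψ' ψ x y := by
        by_contra h; push Not at h
        exact hne.1 (good_ext hn hg' hg h)
      have a2 : ∃ x y, Dis ψ' (fun x => ψ (x + p)) x y := by
        by_contra h; push Not at h
        exact hne.2 (good_ext hn hg' hg1 h)
      obtain ⟨x, y, a1⟩ := a1
      obtain ⟨x', y', a2⟩ := a2
      have b1 := dis_zero hn hp hw.symm hg' hg hc' hc a1
      have b2 := dis_zero hn hp hw.symm hg' hg1 hc' hc1 a2
      have e : ψ (p + p) = ψ 0 := good_per hg (by rw [← two_mul, hw]; simp)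
      unfold Dis at b1 b2
      simp only [zero_add, e] at b2
      rcases b1 with b1 | b1 <;> rcases b2 with b2 | b2
      · exact lt_asymm b1.2 b2.2
      · exact lt_asymm b1.1 b2.1
      · exact lt_asymm b1.1 b2.1
      · exact lt_asymm b1.2 b2.2
    · rintro (rfl | rfl)
      · exact ⟨hg, hc⟩
      · exact ⟨hg1, hc1⟩

theorem Wd_self {n : ℕ} (hn : 1 ≤ n) {ψ : ℕ → Fin n} (h : Good n ψ) : ψ ∈ Wd n n :=
  (mem_Wd hn _).2 ((mp_dvd _ _).2 h.1)

def BB (k n : ℕ) : Finset ((ℕ → Fin (2*k)) × (ℕ → Fin n)) :=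
  ((Wd (2*k) n) ×ˢ (Wd n n)).filter fun p => Good n p.2 ∧ WC p.1 p.2

theorem card_BB (k n : ℕ) (hn : 1 ≤ n) : (BB k n).card = TT k n := by
  unfold BB TT
  rw [Finset.card_filter, Finset.sum_product, Finset.card_filter, Finset.card_filter,
    Finset.mul_sum, ← Finset.sum_add_distrib]
  apply Finset.sum_congr rfl
  intro w hw
  rw [mem_Wd hn] at hw
  rw [← Finset.card_filter]
  have e : ((Wd n n).filter fun ψ => Good n ψ ∧ WC w ψ).card =
      {ψ : ℕ → Fin n | Good n ψ ∧ WC w ψ}.ncard := by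
    rw [← Set.ncard_coe_finset]
    congr 1
    ext ψ
    simp only [Finset.coe_filter, Set.mem_ofPred_eq]
    exact ⟨fun h => h.2, fun h => ⟨Wd_self hn h.1, h⟩⟩
  rw [e]
  by_cases h1 : mp w = n
  · rw [fiber_one hn w h1, if_pos h1, if_neg (by omega)]
    rfl
  · by_cases h2 : 2 * mp w = n ∧ sg w (mp w) = -1
    · rw [fiber_two hn w h2.1 h2.2, if_neg h1, if_pos h2]
      rfl
    · rw [if_neg h1, if_neg h2]
      have : {ψ : ℕ → Fin n | Good n ψ ∧ WC w ψ} = ∅ := by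
        ext ψ
        simp only [Set.mem_ofPred_eq, Set.mem_empty_iff_false, iff_false]
        rintro ⟨a, b⟩
        rcases necessary a b hn hw with h | h
        · exact h1 h
        · exact h2 h
      rw [this]; simp

theorem card_trip (k n : ℕ) (hn : 1 ≤ n) :
    n * ∑ π ∈ cyclicSet n,
      (Finset.univ.filter fun f : Fin n → Fin (2*k) => Comp n (2*k) posO π f).card = TT k n := by
  rw [← card_BB k n hn]
  have e : n * ∑ π ∈ cyclicSet n,
      (Finset.univ.filter fun f : Fin n → Fin (2*k) => Comp n (2*k) posO π f).card
      = ((cyclicSet n ×ˢ ((Finset.univ : Finset (Fin n)) ×ˢ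
        (Finset.univ : Finset (Fin n → Fin (2*k))))).filter
          fun t => Comp n (2*k) posO t.1 t.2.2).card := by
    rw [Finset.card_filter, Finset.sum_product, Finset.mul_sum]
    apply Finset.sum_congr rfl
    intro π _
    rw [Finset.sum_product, Finset.card_filter]
    simp
  rw [e]
  have hcyc : ∀ π, π ∈ cyclicSet n ↔ IsCyclicPerm n π := by intro π; simp [cyclicSet]
  apply Finset.card_bij (fun t _ => (fun j => t.2.2 ((t.1 ^ j) t.2.1), fun j => (t.1 ^ j) t.2.1))
  · rintro ⟨π, x0, f⟩ ht
    simp only [Finset.mem_filter, Finset.mem_product, Finset.mem_univ, and_true, hcyc] at ht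
    obtain ⟨hπ, hC⟩ := ht
    have hon := (cyc_iff0 n hn π).1 hπ
    have hper : ∀ x, (π ^ (x + n)) x0 = (π ^ x) x0 := by
      intro x
      rw [hon.pow_apply_eq_pow_apply (Finset.mem_univ _)]
      simp [Nat.ModEq]
    have hg : Good n (fun j => (π ^ j) x0) := by
      refine ⟨hper, fun x y h => ?_⟩
      have := (hon.pow_apply_eq_pow_apply (Finset.mem_univ _)).1 h
      simpa [Nat.ModEq] using this
    simp only [BB, Finset.mem_filter, Finset.mem_product]
    refine ⟨⟨?_, Wd_self hn hg⟩, hg, ?_⟩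
    · rw [mem_Wd hn, mp_dvd]
      intro x
      rw [hper]
    · intro x y hxy
      have := hC _ _ hxy
      simp only [pow_succ', Equiv.Perm.mul_apply]
      exact this
  · rintro ⟨π, x0, f⟩ ht ⟨π', x0', f'⟩ ht' h
    simp only [Finset.mem_filter, Finset.mem_product, Finset.mem_univ, and_true, hcyc] at ht ht'
    simp only [Prod.mk.injEq] at h
    obtain ⟨h1, h2⟩ := h
    have e0 : x0 = x0' := by simpa using congrFun h2 0
    have hs := (cyc_iff n hn π).1 ht.1 x0
    have eπ : π = π' := by
      ext1 y
      obtain ⟨j, rfl⟩ := hs y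
      have a := congrFun h2 (j+1)
      have b := congrFun h2 j
      simp only [pow_succ', Equiv.Perm.mul_apply] at a b
      rw [a, b]
    have ef : f = f' := by
      funext y
      obtain ⟨j, rfl⟩ := hs y
      have a := congrFun h1 j
      have b := congrFun h2 j
      exact a.trans (by rw [← b])
    rw [e0, eπ, ef]
  · rintro ⟨w, ψ⟩ hp
    simp only [BB, Finset.mem_filter, Finset.mem_product] at hp
    obtain ⟨⟨hw, _⟩, hg, hc⟩ := hp
    rw [mem_Wd hn, mp_dvd] at hw
    have hinj : Function.Injective (fun x : Fin n => ψ x) := by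
      intro a b hab
      have := hg.2 a b hab
      rw [Nat.mod_eq_of_lt a.2, Nat.mod_eq_of_lt b.2] at this
      exact Fin.ext this
    let e : Fin n ≃ Fin n := Equiv.ofBijective _ (Finite.injective_iff_bijective.1 hinj)
    have he : ∀ x, (e.symm (ψ x) : ℕ) = x % n := by
      intro x
      have : e ⟨x % n, Nat.mod_lt _ hn⟩ = ψ x := per_mod hg.1 x
      rw [← this, Equiv.symm_apply_apply]
    have hinj2 : Function.Injective (fun i : Fin n => ψ ((e.symm i : ℕ) + 1)) := by
      intro a b hab
      have := Nat.ModEq.add_right_cancel' 1 (hg.2 _ _ hab)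
      unfold Nat.ModEq at this
      rw [Nat.mod_eq_of_lt (e.symm a).2, Nat.mod_eq_of_lt (e.symm b).2] at this
      exact e.symm.injective (Fin.ext this)
    let π : Equiv.Perm (Fin n) := Equiv.ofBijective _ (Finite.injective_iff_bijective.1 hinj2)
    have hπ : ∀ x, π (ψ x) = ψ (x+1) := by
      intro x
      change ψ ((e.symm (ψ x) : ℕ) + 1) = ψ (x+1)
      rw [he]
      apply good_per hg
      simp
    have hpow : ∀ j x, (π ^ j) (ψ x) = ψ (x + j) := by
      intro j
      induction j with
      | zero => intro x; simp
      | succ j ih => intro x; rw [pow_succ', Equiv.Perm.mul_apply, ih, hπ]; rfl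
    have hf : ∀ x, w (e.symm (ψ x) : ℕ) = w x := by
      intro x; rw [he, per_mod hw]
    refine ⟨(π, ψ 0, fun i => w (e.symm i : ℕ)), ?_, ?_⟩
    · simp only [Finset.mem_filter, Finset.mem_product, Finset.mem_univ, and_true, hcyc]
      constructor
      · rw [cyc_iff n hn]
        intro x y
        obtain ⟨a, ha, rfl⟩ := good_surj hg x
        obtain ⟨b, hb, rfl⟩ := good_surj hg y
        refine ⟨b + n - a, ?_⟩
        rw [hpow, show a + (b + n - a) = b + n by omega, hg.1]
      · intro i j hij
        obtain ⟨a, ha, rfl⟩ := good_surj hg i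
        obtain ⟨b, hb, rfl⟩ := good_surj hg j
        simp only [hf, hπ]
        exact hc a b hij
    · simp only [hpow, zero_add, hf]

open PowerSeries in
theorem main_ps (n : ℕ) (hn : 1 ≤ n) :
    (n : PowerSeries ℚ)
        * ∑ π ∈ cyclicSet n,
            (4 : PowerSeries ℚ) ^ (pk n π + 1) * X ^ (pk n π + 1)
              * (1 + X) ^ (n - 1 - 2 * pk n π)
      = ∑ d ∈ n.divisors.filter (fun d => Odd d),
          ((ArithmeticFunction.moebius d : ℤ) : PowerSeries ℚ)
            * 2 ^ (n / d + 1) * (1 - X) ^ (n - n / d)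
            * ((eulerianA (n / d) : Polynomial ℚ) : PowerSeries ℚ) := by
  have hL : (n : PowerSeries ℚ)
        * ∑ π ∈ cyclicSet n,
            (4 : PowerSeries ℚ) ^ (pk n π + 1) * X ^ (pk n π + 1)
              * (1 + X) ^ (n - 1 - 2 * pk n π)
      = 2 * (1 - X) ^ (n + 1) * PowerSeries.mk fun k => (TT k n : ℚ) := by
    have h0 : (PowerSeries.mk fun k => (TT k n : ℚ)) = (n : PowerSeries ℚ) * ∑ π ∈ cyclicSet n,
        PowerSeries.mk fun k => (((Finset.univ.filter fun f : Fin n → Fin (2*k) =>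
          Comp n (2*k) posO π f).card : ℕ) : ℚ) := by
      ext k
      have hc : (n : PowerSeries ℚ) = PowerSeries.C (n : ℚ) := by simp
      rw [hc, PowerSeries.coeff_C_mul, map_sum]
      simp only [PowerSeries.coeff_mk]
      rw [← card_trip k n hn]
      push_cast
      rfl
    rw [h0, mul_left_comm, Finset.mul_sum (a := 2 * (1 - X) ^ (n + 1))]
    congr 1
    apply Finset.sum_congr rfl
    intro π _
    obtain ⟨m, rfl⟩ : ∃ m, n = m + 1 := ⟨n - 1, by omega⟩
    exact peak_gf m π
  rw [hL]
  have h1 : (PowerSeries.mk fun k => (TT k n : ℚ)) = ∑ d ∈ n.divisors.filter (fun d => Odd d),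
      ((ArithmeticFunction.moebius d : ℤ) : PowerSeries ℚ) * 2 ^ (n / d) *
        PowerSeries.mk fun k => (k : ℚ) ^ (n / d) := by
    ext k
    rw [PowerSeries.coeff_mk, TT_eq k n hn, map_sum]
    apply Finset.sum_congr rfl
    intro d _
    have hc : ((ArithmeticFunction.moebius d : ℤ) : PowerSeries ℚ) * 2 ^ (n / d) =
        PowerSeries.C (((ArithmeticFunction.moebius d : ℤ) : ℚ) * 2 ^ (n / d)) := by rw [map_mul, map_pow, map_intCast, map_ofNat]
    rw [hc, PowerSeries.coeff_C_mul, PowerSeries.coeff_mk, mul_pow, mul_assoc]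
  rw [h1, Finset.mul_sum]
  apply Finset.sum_congr rfl
  intro d hd
  have hd1 : d ∣ n := Nat.dvd_of_mem_divisors (Finset.mem_filter.1 hd).1
  have hpos : 1 ≤ n / d := Nat.div_pos (Nat.le_of_dvd hn hd1) (Nat.pos_of_dvd_of_pos hd1 hn)
  rw [eulerian_gf _ hpos]
  have hle : n / d ≤ n := Nat.div_le_self _ _
  have hp : (1 - X : PowerSeries ℚ) ^ (n + 1) = (1 - X) ^ (n - n / d) * (1 - X) ^ (n / d + 1) := by
    rw [← pow_add]; congr 1; omega
  rw [hp, pow_succ (2 : PowerSeries ℚ)]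
  ring

theorem stmt3 (n : ℕ) (hn : 1 ≤ n) :
    (n : Polynomial ℚ)
        * ∑ π ∈ cyclicSet n,
            (4 : Polynomial ℚ) ^ (pk n π + 1) * Polynomial.X ^ (pk n π + 1)
              * (1 + Polynomial.X) ^ (n - 1 - 2 * pk n π)
      = ∑ d ∈ n.divisors.filter (fun d => Odd d),
          ((ArithmeticFunction.moebius d : ℤ) : Polynomial ℚ)
            * 2 ^ (n / d + 1) * (1 - Polynomial.X) ^ (n - n / d)
            * eulerianA (n / d) := by
  apply Polynomial.coe_injective
  have h := main_ps n hn
  have c : ∀ p : Polynomial ℚ, (p : PowerSeries ℚ) = Polynomial.coeToPowerSeries.ringHom p :=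
    fun _ => rfl
  have hX : Polynomial.coeToPowerSeries.ringHom (Polynomial.X : Polynomial ℚ) = PowerSeries.X :=
    Polynomial.coe_X
  simp only [c, map_mul, map_sum, map_pow, map_add, map_sub, map_one, map_natCast, map_intCast,
    map_ofNat, hX] at h ⊢
  exact h

end
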